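/- (Payoff monotonicity under good removal) For any unit-demand market M, any buyer i, and any good j: the payoff of buyer i at the highest competitive equilibrium of M is at most her payoff at the lowest competitive equilibrium of M^{-j} (the market without good j); moreover, if i is matched to j in the highest competitive equilibrium of M, then these two payoffs are equal. -/

import Mathlib

attribute [local instance] Classical.propDecidable

/-- A unit-demand market: finite sets of buyers `I` and goods `J`, with utility
functions `u i j : ℝ → ℝ` that are continuous, strictly decreasing, surjective
(domain and range cover all of `ℝ`), and eventually non-positive. -/
structure Market (I J : Type) [Fintype I] [Fintype J] where
  u : I → J → ℝ → ℝ
  cont : ∀ i j, Continuous (u i j)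
  anti : ∀ i j, StrictAnti (u i j)
  surj : ∀ i j, Function.Surjective (u i j)
  evNonpos : ∀ i j, ∃ x : ℝ, ∀ y ≥ x, u i j y ≤ 0

/-- A competitive equilibrium: nonnegative prices `p`, nonnegative payoffs `w`,
and a partial matching `μ` (injective on matched buyers) such that every buyer
receives a most preferred good at the prices, unmatched buyers have payoff `0`,
and unmatched goods have price `0`. -/
def IsEquilib {I J : Type} [Fintype I] [Fintype J] (M : Market I J)
    (p : J → ℝ) (w : I → ℝ) (μ : I → Option J) : Prop :=
  (∀ i i' j, μ i = some j → μ i' = some j → i = i') ∧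
  (∀ j, 0 ≤ p j) ∧ (∀ i, 0 ≤ w i) ∧
  (∀ i j, μ i = some j → w i = M.u i j (p j)) ∧
  (∀ i j, M.u i j (p j) ≤ w i) ∧
  (∀ i, μ i = none → w i = 0) ∧
  (∀ j, (∀ i, μ i ≠ some j) → p j = 0)

/-- `W` is the lowest competitive equilibrium: its prices are componentwise
below those of every competitive equilibrium. -/
def IsLowest {I J : Type} [Fintype I] [Fintype J] (M : Market I J)
    (p : J → ℝ) (w : I → ℝ) (μ : I → Option J) : Prop :=
  IsEquilib M p w μ ∧ ∀ p' w' μ', IsEquilib M p' w' μ' → ∀ j, p j ≤ p' j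

/-- `W` is the highest competitive equilibrium: its prices are componentwise
above those of every competitive equilibrium. -/
def IsHighest {I J : Type} [Fintype I] [Fintype J] (M : Market I J)
    (p : J → ℝ) (w : I → ℝ) (μ : I → Option J) : Prop :=
  IsEquilib M p w μ ∧ ∀ p' w' μ', IsEquilib M p' w' μ' → ∀ j, p' j ≤ p j

/-- Induced payoff `u_i(p) = max({u_i^j(p^j) : j} ∪ {0})`. -/
noncomputable def inducedPayoff {I J : Type} [Fintype I] [Fintype J] (M : Market I J)
    (p : J → ℝ) (i : I) : ℝ :=
  (insert (0:ℝ) (Finset.univ.image fun j => M.u i j (p j))).max' (Finset.insert_nonempty _ _)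

/-- Induced price `p^j(u) = max({p_i^j(u_i) : i} ∪ {0})`, where `p_i^j` is the
inverse of `u_i^j`. -/
noncomputable def inducedPrice {I J : Type} [Fintype I] [Fintype J] (M : Market I J)
    (w : I → ℝ) (j : J) : ℝ :=
  (insert (0:ℝ) (Finset.univ.image fun i => Function.invFun (M.u i j) (w i))).max' (Finset.insert_nonempty _ _)

/-- The market with buyer `i0` removed. -/
def Market.removeBuyer {I J : Type} [Fintype I] [Fintype J] [DecidableEq I]
    (M : Market I J) (i0 : I) : Market {i : I // i ≠ i0} J where
  u := fun i j => M.u i.1 j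
  cont := fun i j => M.cont i.1 j
  anti := fun i j => M.anti i.1 j
  surj := fun i j => M.surj i.1 j
  evNonpos := fun i j => M.evNonpos i.1 j

/-- The market with good `j0` removed. -/
def Market.removeGood {I J : Type} [Fintype I] [Fintype J] [DecidableEq J]
    (M : Market I J) (j0 : J) : Market I {j : J // j ≠ j0} where
  u := fun i j => M.u i j.1
  cont := fun i j => M.cont i j.1
  anti := fun i j => M.anti i j.1
  surj := fun i j => M.surj i j.1
  evNonpos := fun i j => M.evNonpos i j.1

/-!
Allow a reserve price for every good, an unmatched good being sold at its reserve. Giving `j0` the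
reserve `s > p j0` leaves `j0` unmatched in every equilibrium, since otherwise there would be an
equilibrium of `M` in which `j0` costs more than in the highest one. Such an equilibrium restricts
to `M` without `j0`, so no buyer values `j0` at price `s` above her payoff in the lowest
equilibrium there; letting `s` decrease to `p j0`, the same holds at the price `p j0`. The lowest
equilibrium without `j0` thus extends to an equilibrium with reserve `p j0`, as does the highest
equilibrium of `M`. Their meet uses the matching of `M` only on goods that are strictly cheaper in
`M`, hence not on `j0`, whose two prices agree. So the meet restricts to the market without `j0`,
where its payoffs are at most the lowest-equilibrium payoffs; but they are at least the payoffs in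
`M`. By the decomposition lemma, a buyer who gains from passing from one equilibrium to the other
holds, in the first, a good that gets cheaper; the price of `j0` does not change, so its holder
does not gain.

Equilibria with given reserve prices exist: they are limits of outcomes of an ascending auction as
its bid increment tends to `0`.
-/

open Set Filter Topology

/-- A competitive equilibrium with reserve prices `r`: prices are at least `r`, and the price of an
unmatched good is its reserve price instead of `0`. Reserve prices make it possible to treat the
removal of a good without changing the set of goods. -/
structure IsReserveEquilib {I J : Type} [Fintype I] [Fintype J] (M : Market I J) (r : J → ℝ)
    (p : J → ℝ) (w : I → ℝ) (μ : I → Option J) : Prop where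
  inj : ∀ {i i' j}, μ i = some j → μ i' = some j → i = i'
  reserve_le : ∀ j, r j ≤ p j
  payoff_nonneg : ∀ i, 0 ≤ w i
  payoff_eq : ∀ {i j}, μ i = some j → w i = M.u i j (p j)
  le_payoff : ∀ i j, M.u i j (p j) ≤ w i
  payoff_eq_zero : ∀ {i}, μ i = none → w i = 0
  price_eq : ∀ {j}, (∀ i, μ i ≠ some j) → p j = r j

theorem isReserveEquilib_zero_iff {I J : Type} [Fintype I] [Fintype J] {M : Market I J}
    {p : J → ℝ} {w : I → ℝ} {μ : I → Option J} :
    IsReserveEquilib M 0 p w μ ↔ IsEquilib M p w μ :=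
  ⟨fun ⟨inj, price, nonneg, eq, le, eq_zero, unmatched⟩ =>
    ⟨fun _ _ _ => inj, price, nonneg, fun _ _ => eq, le, fun _ => eq_zero, fun _ => unmatched⟩,
  fun ⟨inj, price, nonneg, eq, le, eq_zero, unmatched⟩ =>
    ⟨inj _ _ _, price, nonneg, eq _ _, le, eq_zero _, unmatched _⟩⟩

namespace IsReserveEquilib

variable {I J : Type} [Fintype I] [Fintype J] {M : Market I J} {r r' p p' : J → ℝ} {w w' : I → ℝ}
  {μ μ' : I → Option J}

theorem exists_match_of_payoff_pos (h : IsReserveEquilib M r p w μ) {i : I} (hi : 0 < w i) :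
    ∃ j, μ i = some j :=
  Option.ne_none_iff_exists'.mp fun hn => hi.ne' (h.payoff_eq_zero hn)

theorem exists_match_of_reserve_lt (h : IsReserveEquilib M r p w μ) {j : J} (hj : r j < p j) :
    ∃ i, μ i = some j := by
  by_contra! hn
  exact hj.ne' (h.price_eq hn)

theorem payoff_le_of_price_le (h : IsReserveEquilib M r p w μ)
    (h' : IsReserveEquilib M r' p' w' μ') (hp : p ≤ p') : w' ≤ w := fun i => by
  cases hi : μ' i with
  | none => exact (h'.payoff_eq_zero hi).trans_le (h.payoff_nonneg i)
  | some j =>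
    rw [h'.payoff_eq hi]
    exact ((M.anti i j).antitone (hp j)).trans (h.le_payoff i j)

theorem price_lt_of_payoff_lt (h : IsReserveEquilib M r p w μ)
    (h' : IsReserveEquilib M r' p' w' μ') {i : I} {j : J} (hij : μ' i = some j) (hi : w i < w' i) :
    p' j < p j :=
  (M.anti i j).lt_iff_gt.mp <| ((h.le_payoff i j).trans_lt hi).trans_eq (h'.payoff_eq hij)

theorem payoff_lt_of_price_lt (h : IsReserveEquilib M r p w μ)
    (h' : IsReserveEquilib M r' p' w' μ') {i : I} {j : J} (hij : μ i = some j) (hj : p' j < p j) :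
    w i < w' i :=
  ((h.payoff_eq hij).trans_lt (M.anti i j hj)).trans_le (h'.le_payoff i j)

/-- The two matchings inject the buyers who gain and the goods that get cheaper into each other, so
by finiteness both injections are surjective. -/
theorem decomposition (h : IsReserveEquilib M r p w μ) (h' : IsReserveEquilib M r' p' w' μ')
    (hr : r ≤ r') :
    (∀ i, w i < w' i → ∃ j, μ i = some j ∧ p' j < p j) ∧
      ∀ j, p' j < p j → ∃ i, μ' i = some j ∧ w i < w' i := by
  have hgood (i : {i // w i < w' i}) : ∃ j : {j // p' j < p j}, μ' i = some j.1 := by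
    obtain ⟨j, hj⟩ := h'.exists_match_of_payoff_pos ((h.payoff_nonneg i).trans_lt i.2)
    exact ⟨⟨j, h.price_lt_of_payoff_lt h' hj i.2⟩, hj⟩
  have hbuyer (j : {j // p' j < p j}) : ∃ i : {i // w i < w' i}, μ i = some j.1 := by
    obtain ⟨i, hi⟩ := h.exists_match_of_reserve_lt (((hr j).trans (h'.reserve_le j)).trans_lt j.2)
    exact ⟨⟨i, h.payoff_lt_of_price_lt h' hi j.2⟩, hi⟩
  choose good hgood using hgood
  choose buyer hbuyer using hbuyer
  have good_inj : good.Injective := fun i i' heq =>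
    Subtype.ext (h'.inj (hgood i) (heq ▸ hgood i'))
  have buyer_inj : buyer.Injective := fun j j' heq =>
    Subtype.ext (Option.some.inj ((hbuyer j).symm.trans (heq ▸ hbuyer j')))
  have good_surj := (good_inj.bijective_of_nat_card_le
    (Nat.card_le_card_of_injective buyer buyer_inj)).surjective
  have buyer_surj := (buyer_inj.bijective_of_nat_card_le
    (Nat.card_le_card_of_injective good good_inj)).surjective
  constructor
  · intro i hi
    obtain ⟨j, hj⟩ := buyer_surj ⟨i, hi⟩
    exact ⟨j, by simpa only [hj] using hbuyer j, j.2⟩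
  · intro j hj
    obtain ⟨i, hi⟩ := good_surj ⟨j, hj⟩
    exact ⟨i, by simpa only [hi] using hgood i, i.2⟩

theorem payoff_eq_of_price_eq (h : IsReserveEquilib M r p w μ)
    (h' : IsReserveEquilib M r' p' w' μ') (hr : r ≤ r') {i : I} {j : J} (hij : μ i = some j)
    (hj : p j = p' j) : w i = w' i := by
  refine le_antisymm ?_ (not_lt.mp fun hlt => ?_)
  · rw [h.payoff_eq hij, hj]
    exact h'.le_payoff i j
  · obtain ⟨j', hij', hlt'⟩ := (h.decomposition h' hr).1 i hlt
    obtain rfl : j = j' := Option.some.inj (hij.symm.trans hij')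
    exact hlt'.ne' hj

theorem inf_match_cases (h : IsReserveEquilib M r p w μ) (h' : IsReserveEquilib M r' p' w' μ')
    {i : I} {j : J} (hij : (if w' i < w i then μ i else μ' i) = some j) :
    (w' i < w i ∧ p j < p' j ∧ μ i = some j) ∨ (w i ≤ w' i ∧ p' j ≤ p j ∧ μ' i = some j) := by
  split_ifs at hij with hi
  · exact .inl ⟨hi, h'.price_lt_of_payoff_lt h hij hi, hij⟩
  · exact .inr ⟨not_lt.mp hi, not_lt.mp fun hj => hi (h'.payoff_lt_of_price_lt h hij hj), hij⟩

theorem inf (h : IsReserveEquilib M r p w μ) (h' : IsReserveEquilib M r p' w' μ') :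
    IsReserveEquilib M r (p ⊓ p') (w ⊔ w') (fun i => if w' i < w i then μ i else μ' i) where
  inj {i i' j} hi hi' := by
    rcases h.inf_match_cases h' hi with ⟨-, hj, hi⟩ | ⟨-, hj, hi⟩ <;>
      rcases h.inf_match_cases h' hi' with ⟨-, hj', hi'⟩ | ⟨-, hj', hi'⟩
    · exact h.inj hi hi'
    · exact absurd hj hj'.not_gt
    · exact absurd hj' hj.not_gt
    · exact h'.inj hi hi'
  reserve_le j := le_inf (h.reserve_le j) (h'.reserve_le j)
  payoff_nonneg i := le_sup_of_le_left (h.payoff_nonneg i)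
  payoff_eq {i j} hi := by
    rw [Pi.sup_apply, Pi.inf_apply]
    rcases h.inf_match_cases h' hi with ⟨hw, hp, hi⟩ | ⟨hw, hp, hi⟩
    · rw [sup_of_le_left hw.le, inf_of_le_left hp.le, h.payoff_eq hi]
    · rw [sup_of_le_right hw, inf_of_le_right hp, h'.payoff_eq hi]
  le_payoff i j := by
    rw [Pi.sup_apply, Pi.inf_apply, (M.anti i j).antitone.map_inf]
    exact sup_le_sup (h.le_payoff i j) (h'.le_payoff i j)
  payoff_eq_zero {i} hi := by
    rw [Pi.sup_apply]
    split_ifs at hi with hw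
    · exact absurd (h.payoff_eq_zero hi) ((h'.payoff_nonneg i).trans_lt hw).ne'
    · rw [sup_of_le_right (not_lt.mp hw), h'.payoff_eq_zero hi]
  price_eq {j} hj := by
    rw [Pi.inf_apply]
    have hp : p' j ≤ p j := by
      by_contra! hlt
      obtain ⟨i, hij, hi⟩ := (h'.decomposition h le_rfl).2 j hlt
      exact hj i ((if_pos hi).trans hij)
    rw [inf_of_le_right hp]
    refine h'.price_eq fun i hij => ?_
    by_cases hi : w' i < w i
    · obtain ⟨j', hij', hlt⟩ := (h'.decomposition h le_rfl).1 i hi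
      obtain rfl : j = j' := Option.some.inj (hij.symm.trans hij')
      exact hlt.not_ge hp
    · exact hj i ((if_neg hi).trans hij)

theorem raise_reserve [DecidableEq J] (h : IsReserveEquilib M r p w μ) (j : J) :
    IsReserveEquilib M (Function.update r j (p j)) p w μ :=
  { h with
    reserve_le := update_le_iff.mpr ⟨le_rfl, fun j' _ => h.reserve_le j'⟩
    price_eq := fun {j'} hj' => by
      rcases eq_or_ne j' j with rfl | hne
      · rw [Function.update_self]
      · rw [Function.update_of_ne hne, h.price_eq hj'] }

theorem lower_reserve [DecidableEq J] {j : J} {s : ℝ}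
    (h : IsReserveEquilib M (Function.update r j s) p w μ) (hs : r j ≤ s) {i : I}
    (hi : μ i = some j) : IsReserveEquilib M r p w μ :=
  { h with
    reserve_le := (le_update_self_iff.mpr hs).trans h.reserve_le
    price_eq := fun {j'} hj' => by
      have hne : j' ≠ j := fun heq => hj' i (heq ▸ hi)
      rw [h.price_eq hj', Function.update_of_ne hne] }

end IsReserveEquilib

/-- A stage of the ascending auction with increment `ε` started at the reserve prices `r`. The
provisional matching `μ` is stable if the matched buyers are charged one increment less than the
current prices `p`, so that a buyer keeps her good until somebody else outbids her. -/
structure IsAuctionState {I J : Type} [Fintype I] [Fintype J] (M : Market I J) (r : J → ℝ) (ε : ℝ)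
    (p : J → ℝ) (μ : I → Option J) : Prop where
  inj : ∀ {i i' j}, μ i = some j → μ i' = some j → i = i'
  reserve_le : ∀ j, r j ≤ p j
  price_eq : ∀ {j}, (∀ i, μ i ≠ some j) → p j = r j
  nonneg : ∀ {i j}, μ i = some j → 0 ≤ M.u i j (p j - ε)
  envy_free : ∀ {i j}, μ i = some j → ∀ j', M.u i j' (p j') ≤ M.u i j (p j - ε)

/-- A stage of the ascending auction at which no unmatched buyer wants to bid. For `ε = 0` this is
a competitive equilibrium. -/
structure IsAuctionOutcome {I J : Type} [Fintype I] [Fintype J] (M : Market I J) (r : J → ℝ)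
    (ε : ℝ) (p : J → ℝ) (μ : I → Option J) : Prop extends IsAuctionState M r ε p μ where
  sated : ∀ {i}, μ i = none → ∀ j, M.u i j (p j) ≤ 0

/-- The matching after buyer `i` outbids the current holder of good `j`. -/
def outbid {I J : Type*} [DecidableEq I] [DecidableEq J] (μ : I → Option J) (i : I) (j : J) :
    I → Option J :=
  fun i' => if i' = i then some j else if μ i' = some j then none else μ i'

theorem outbid_eq_some_iff {I J : Type*} [DecidableEq I] [DecidableEq J] {μ : I → Option J}
    {i i' : I} {j j' : J} (hi : μ i = none) :
    outbid μ i j i' = some j' ↔ i' = i ∧ j' = j ∨ j' ≠ j ∧ μ i' = some j' := by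
  grind [outbid]

section Auction

variable {I J : Type} [Fintype I] [Fintype J] {M : Market I J} {r p : J → ℝ} {ε X : ℝ}
  {μ : I → Option J}

theorem Market.exists_price_bound (M : Market I J) : ∃ X, ∀ i j y, 0 ≤ M.u i j y → y ≤ X := by
  choose z hz using fun i j => M.surj i j 0
  obtain ⟨X, hX⟩ := Finite.exists_le fun a : I × J => z a.1 a.2
  refine ⟨X, fun i j y hy => ?_⟩
  rw [← hz i j, (M.anti i j).le_iff_ge] at hy
  exact hy.trans (hX (i, j))

theorem IsAuctionState.price_le (h : IsAuctionState M r ε p μ) (hε : 0 ≤ ε)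
    (hX : ∀ i j y, 0 ≤ M.u i j y → y ≤ X) (j : J) : p j ≤ max (r j) X + ε := by
  by_cases hj : ∃ i, μ i = some j
  · obtain ⟨i, hi⟩ := hj
    exact sub_le_iff_le_add.mp ((hX i j _ (h.nonneg hi)).trans (le_max_right _ _))
  · rw [h.price_eq (not_exists.mp hj)]
    exact (le_max_left _ _).trans (le_add_of_nonneg_right hε)

theorem isAuctionState_reserve (M : Market I J) (r : J → ℝ) (ε : ℝ) :
    IsAuctionState M r ε r fun _ => none :=
  ⟨nofun, fun _ => le_rfl, fun _ => rfl, nofun, nofun⟩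

theorem IsAuctionState.outbid (h : IsAuctionState M r ε p μ) (hε : 0 ≤ ε) {i : I}
    (hi : μ i = none) {j : J} (hpos : 0 ≤ M.u i j (p j))
    (hmax : ∀ j', M.u i j' (p j') ≤ M.u i j (p j)) :
    IsAuctionState M r ε (p + Pi.single j ε) (outbid μ i j) := by
  have hself : (p + Pi.single j ε : J → ℝ) j = p j + ε := by
    rw [Pi.add_apply, Pi.single_eq_same]
  have hne {j'} (hj' : j' ≠ j) : (p + Pi.single j ε : J → ℝ) j' = p j' := by
    rw [Pi.add_apply, Pi.single_eq_of_ne hj', add_zero]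
  have hle : p ≤ p + Pi.single j ε := le_add_of_nonneg_right (Pi.single_nonneg.mpr hε)
  have hu (i' j') : M.u i' j' ((p + Pi.single j ε : J → ℝ) j') ≤ M.u i' j' (p j') :=
    (M.anti i' j').antitone (hle j')
  constructor
  · intro a a' b ha ha'
    rw [outbid_eq_some_iff hi] at ha ha'
    rcases ha with ⟨rfl, rfl⟩ | ⟨hb, ha⟩ <;> rcases ha' with ⟨rfl, hb'⟩ | ⟨hb', ha'⟩
    · rfl
    · exact absurd rfl hb'
    · exact absurd hb' hb
    · exact h.inj ha ha'
  · exact fun b => (h.reserve_le b).trans (hle b)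
  · intro b hb
    have hbj : b ≠ j := fun hbj => hb i ((outbid_eq_some_iff hi).mpr (.inl ⟨rfl, hbj⟩))
    rw [hne hbj]
    exact h.price_eq fun a ha => hb a ((outbid_eq_some_iff hi).mpr (.inr ⟨hbj, ha⟩))
  · intro a b ha
    rcases (outbid_eq_some_iff hi).mp ha with ⟨rfl, rfl⟩ | ⟨hb, ha⟩
    · rwa [hself, add_sub_cancel_right]
    · rw [hne hb]
      exact h.nonneg ha
  · intro a b ha b'
    refine (hu a b').trans ?_
    rcases (outbid_eq_some_iff hi).mp ha with ⟨rfl, rfl⟩ | ⟨hb, ha⟩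
    · rw [hself, add_sub_cancel_right]
      exact hmax b'
    · rw [hne hb]
      exact h.envy_free ha b'

theorem IsAuctionState.exists_sum_add (h : IsAuctionState M r ε p μ) (hε : 0 ≤ ε)
    (hout : ¬ IsAuctionOutcome M r ε p μ) :
    ∃ p' μ', IsAuctionState M r ε p' μ' ∧ ∑ j, p' j = ∑ j, p j + ε := by
  have hbid : ∃ i, μ i = none ∧ ∃ j, 0 < M.u i j (p j) := by
    by_contra! hsated
    exact hout ⟨h, fun hi => hsated _ hi⟩
  obtain ⟨i, hi, j₀, hpos⟩ := hbid
  have : Nonempty J := ⟨j₀⟩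
  obtain ⟨j, hmax⟩ := Finite.exists_max fun j => M.u i j (p j)
  refine ⟨_, _, h.outbid hε hi (hpos.le.trans (hmax j₀)) hmax, ?_⟩
  simp only [Pi.add_apply, Finset.sum_add_distrib, Fintype.sum_pi_single']

theorem Market.exists_isAuctionOutcome (M : Market I J) (r : J → ℝ) (hε : 0 < ε) :
    ∃ p μ, IsAuctionOutcome M r ε p μ := by
  obtain ⟨X, hX⟩ := M.exists_price_bound
  let S : Set ℝ := {s | ∃ p μ, IsAuctionState M r ε p μ ∧ ∑ j, p j = s}
  have hS : S.Nonempty := ⟨_, r, _, isAuctionState_reserve M r ε, rfl⟩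
  have hbdd : BddAbove S := by
    refine ⟨∑ j, (max (r j) X + ε), ?_⟩
    rintro _ ⟨p, μ, h, rfl⟩
    exact Finset.sum_le_sum fun j _ => h.price_le hε.le hX j
  obtain ⟨_, ⟨p, μ, h, rfl⟩, hlt⟩ := exists_lt_of_lt_csSup hS (sub_lt_self (sSup S) hε)
  refine ⟨p, μ, ?_⟩
  by_contra hout
  obtain ⟨p', μ', h', hsum⟩ := h.exists_sum_add hε.le hout
  have hle : ∑ j, p' j ≤ sSup S := le_csSup hbdd ⟨p', μ', h', rfl⟩
  linarith

theorem isClosed_setOf_isAuctionOutcome (M : Market I J) (r : J → ℝ) (μ : I → Option J) :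
    IsClosed {x : ℝ × (J → ℝ) | IsAuctionOutcome M r x.1 x.2 μ} := by
  refine IsSeqClosed.isClosed fun x y hx hxy => ?_
  have hprice (j) : Tendsto (fun n => (x n).2 j) atTop (𝓝 (y.2 j)) :=
    ((continuous_apply j).comp continuous_snd).continuousAt.tendsto.comp hxy
  have hu (i j) : Tendsto (fun n => M.u i j ((x n).2 j)) atTop (𝓝 (M.u i j (y.2 j))) :=
    ((M.cont i j).tendsto _).comp (hprice j)
  have hu' (i j) : Tendsto (fun n => M.u i j ((x n).2 j - (x n).1)) atTop
      (𝓝 (M.u i j (y.2 j - y.1))) :=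
    ((M.cont i j).tendsto _).comp ((hprice j).sub (continuous_fst.continuousAt.tendsto.comp hxy))
  exact
    { inj := (hx 0).inj
      reserve_le := fun j => ge_of_tendsto' (hprice j) fun n => (hx n).reserve_le j
      price_eq := fun {j} hj => tendsto_nhds_unique (hprice j)
        (tendsto_const_nhds.congr fun n => ((hx n).price_eq hj).symm)
      nonneg := fun hi => ge_of_tendsto' (hu' _ _) fun n => (hx n).nonneg hi
      envy_free := fun hi j => le_of_tendsto_of_tendsto' (hu _ j) (hu' _ _)
        fun n => (hx n).envy_free hi j
      sated := fun hi j => le_of_tendsto' (hu _ j) fun n => (hx n).sated hi j }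

theorem Market.exists_isAuctionOutcome_zero (M : Market I J) (r : J → ℝ) :
    ∃ p μ, IsAuctionOutcome M r 0 p μ := by
  obtain ⟨X, hX⟩ := M.exists_price_bound
  let K : Set (ℝ × (J → ℝ)) := (Icc 0 1 ×ˢ Icc r fun j => max (r j) X + 1) ∩
    ⋃ μ : I → Option J, {x | IsAuctionOutcome M r x.1 x.2 μ}
  have hK : IsCompact K := (isCompact_Icc.prod isCompact_Icc).inter_right
    (isClosed_iUnion_of_finite (isClosed_setOf_isAuctionOutcome M r))
  have hsub : Ioc 0 1 ⊆ Prod.fst '' K := by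
    intro ε hε
    obtain ⟨p, μ, h⟩ := M.exists_isAuctionOutcome r hε.1
    exact ⟨(ε, p), ⟨⟨⟨hε.1.le, hε.2⟩, h.reserve_le, fun j => (h.price_le hε.1.le hX j).trans
      (add_le_add_right hε.2 _)⟩, mem_iUnion.mpr ⟨μ, h⟩⟩, rfl⟩
  have hzero : (0 : ℝ) ∈ closure (Ioc 0 1) := by
    rw [closure_Ioc zero_ne_one]
    exact left_mem_Icc.mpr zero_le_one
  obtain ⟨⟨_, p⟩, hp, rfl⟩ :=
    (hK.image continuous_fst).isClosed.closure_subset_iff.mpr hsub hzero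
  obtain ⟨μ, h⟩ := mem_iUnion.mp hp.2
  exact ⟨p, μ, h⟩

theorem IsAuctionOutcome.isReserveEquilib (h : IsAuctionOutcome M r 0 p μ) :
    IsReserveEquilib M r p (fun i => (μ i).elim 0 fun j => M.u i j (p j)) μ where
  inj := h.inj
  reserve_le := h.reserve_le
  payoff_nonneg i := by
    cases hi : μ i with
    | none => exact le_rfl
    | some j => simpa only [Option.elim, sub_zero] using h.nonneg hi
  payoff_eq hi := by rw [hi, Option.elim_some]
  le_payoff i j := by
    cases hi : μ i with
    | none => exact h.sated hi j
    | some j' => simpa only [Option.elim, sub_zero] using h.envy_free hi j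
  payoff_eq_zero hi := by rw [hi, Option.elim_none]
  price_eq := h.price_eq

theorem Market.exists_isReserveEquilib (M : Market I J) (r : J → ℝ) :
    ∃ p w μ, IsReserveEquilib M r p w μ := by
  obtain ⟨p, μ, h⟩ := M.exists_isAuctionOutcome_zero r
  exact ⟨p, _, μ, h.isReserveEquilib⟩

end Auction

section RemoveGood

variable {I J : Type} [Fintype I] [Fintype J] [DecidableEq J] {M : Market I J} {j0 : J}
  {r p q : J → ℝ} {w v : I → ℝ} {μ ν : I → Option J} {s : ℝ}
  {pg : {j : J // j ≠ j0} → ℝ} {wg : I → ℝ} {μg : I → Option {j : J // j ≠ j0}}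

theorem isReserveEquilib_removeGood_iff :
    IsReserveEquilib M r p w (fun i => (μg i).map Subtype.val) ↔
      IsReserveEquilib (M.removeGood j0) (fun j => r j) (fun j => p j) w μg ∧
        p j0 = r j0 ∧ ∀ i, M.u i j0 (p j0) ≤ w i := by
  have hmap {i} {j : {j // j ≠ j0}} : (μg i).map Subtype.val = some j.1 ↔ μg i = some j := by
    rw [← Option.map_some, (Option.map_injective Subtype.val_injective).eq_iff]
  have hval {i j} (hij : (μg i).map Subtype.val = some j) : j ≠ j0 := by
    obtain ⟨j', -, rfl⟩ := Option.map_eq_some_iff.mp hij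
    exact j'.2
  constructor
  · exact fun h => ⟨
      { inj := fun hi hi' => h.inj (hmap.mpr hi) (hmap.mpr hi')
        reserve_le := fun j => h.reserve_le j
        payoff_nonneg := h.payoff_nonneg
        payoff_eq := fun hi => h.payoff_eq (hmap.mpr hi)
        le_payoff := fun i j => h.le_payoff i j
        payoff_eq_zero := fun hi => h.payoff_eq_zero (Option.map_eq_none_iff.mpr hi)
        price_eq := fun hj => h.price_eq fun i hi => hj i (hmap.mp hi) },
      h.price_eq fun i hi => hval hi rfl, fun i => h.le_payoff i j0⟩
  · rintro ⟨h, hp, hu⟩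
    exact
      { inj := fun {i i' j} hi hi' =>
          h.inj (j := ⟨j, hval hi⟩) (hmap.mp hi) (hmap.mp hi')
        reserve_le := fun j => if hj : j = j0 then hj ▸ hp.ge else h.reserve_le ⟨j, hj⟩
        payoff_nonneg := h.payoff_nonneg
        payoff_eq := fun {i j} hi => h.payoff_eq (j := ⟨j, hval hi⟩) (hmap.mp hi)
        le_payoff := fun i j => if hj : j = j0 then hj ▸ hu i else h.le_payoff i ⟨j, hj⟩
        payoff_eq_zero := fun hi => h.payoff_eq_zero (Option.map_eq_none_iff.mp hi)
        price_eq := fun {j} hj => if hj0 : j = j0 then hj0 ▸ hp else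
          h.price_eq (j := ⟨j, hj0⟩) fun i hi => hj i (hmap.mpr hi) }

theorem isReserveEquilib_update_zero_iff :
    IsReserveEquilib M (Function.update 0 j0 s) p w (fun i => (μg i).map Subtype.val) ↔
      IsEquilib (M.removeGood j0) (fun j => p j) w μg ∧ p j0 = s ∧
        ∀ i, M.u i j0 (p j0) ≤ w i := by
  have hr : (fun j : {j // j ≠ j0} => Function.update (0 : J → ℝ) j0 s j) = 0 :=
    funext fun j => Function.update_of_ne j.2 _ _
  rw [isReserveEquilib_removeGood_iff, hr, isReserveEquilib_zero_iff, Function.update_self]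

theorem IsReserveEquilib.exists_isEquilib_removeGood
    (h : IsReserveEquilib M (Function.update 0 j0 s) p w μ) (hj0 : ∀ i, μ i ≠ some j0) :
    ∃ ν, IsEquilib (M.removeGood j0) (fun j => p j) w ν := by
  have hne (i : I) (j : J) (hij : j ∈ μ i) : j ≠ j0 := fun hj => hj0 i (hj ▸ hij)
  have hμ : μ = fun i => ((μ i).pmap Subtype.mk (hne i)).map Subtype.val := by
    simp only [Option.map_pmap, Option.pmap_eq_map, Option.map_id']
  rw [hμ, isReserveEquilib_update_zero_iff] at h
  exact ⟨_, h.1⟩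

theorem IsEquilib.extend (h : IsEquilib (M.removeGood j0) pg wg μg)
    (hs : ∀ i, M.u i j0 s ≤ wg i) :
    IsReserveEquilib M (Function.update 0 j0 s) (Function.extend Subtype.val pg fun _ => s) wg
      (fun i => (μg i).map Subtype.val) := by
  have hp : (fun j : {j // j ≠ j0} => Function.extend Subtype.val pg (fun _ => s) j) = pg :=
    Function.extend_comp Subtype.val_injective pg _
  have hp0 : Function.extend Subtype.val pg (fun _ => s) j0 = s :=
    Function.extend_apply' _ _ _ fun ⟨j, hj⟩ => j.2 hj
  rw [isReserveEquilib_update_zero_iff, hp, hp0]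
  exact ⟨h, rfl, hs⟩

theorem IsLowest.payoff_le_of_removeGood (hlow : IsLowest (M.removeGood j0) pg wg μg)
    (h : IsReserveEquilib M (Function.update 0 j0 s) q v ν) (hj0 : ∀ i, ν i ≠ some j0) :
    v ≤ wg := by
  obtain ⟨ν', h'⟩ := h.exists_isEquilib_removeGood hj0
  exact (isReserveEquilib_zero_iff.mpr hlow.1).payoff_le_of_price_le
    (isReserveEquilib_zero_iff.mpr h') (hlow.2 _ _ _ h')

theorem IsHighest.unmatched_of_price_lt (hhigh : IsHighest M p w μ) (hs : p j0 < s)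
    (h : IsReserveEquilib M (Function.update 0 j0 s) q v ν) (i : I) : ν i ≠ some j0 := by
  intro hi
  have hs0 : 0 ≤ s := ((isReserveEquilib_zero_iff.mpr hhigh.1).reserve_le j0).trans hs.le
  have hq : q j0 ≤ p j0 :=
    hhigh.2 _ _ _ (isReserveEquilib_zero_iff.mp (h.lower_reserve hs0 hi)) j0
  have hsq : s ≤ q j0 := by simpa only [Function.update_self] using h.reserve_le j0
  exact (hs.trans_le hsq).not_ge hq

theorem IsHighest.utility_le_payoff_removeGood (hhigh : IsHighest M p w μ)
    (hlow : IsLowest (M.removeGood j0) pg wg μg) (i : I) : M.u i j0 (p j0) ≤ wg i := by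
  have hs : ∀ s > p j0, M.u i j0 s ≤ wg i := by
    intro s hs
    obtain ⟨q, v, ν, h⟩ := M.exists_isReserveEquilib (Function.update 0 j0 s)
    have hj0 := hhigh.unmatched_of_price_lt hs h
    calc M.u i j0 s = M.u i j0 (q j0) := by rw [h.price_eq hj0, Function.update_self]
      _ ≤ v i := h.le_payoff i j0
      _ ≤ wg i := hlow.payoff_le_of_removeGood h hj0 i
  exact ContinuousWithinAt.closure_le (s := Ioi (p j0)) (by simp)
    (M.cont i j0).continuousWithinAt continuousWithinAt_const hs

end RemoveGood

/-- Payoff monotonicity under good removal: the payoff of any buyer `i` at the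
highest equilibrium of `M` is at most her payoff at the lowest equilibrium of
`M` without good `j0`, with equality when `i` is matched to `j0` at the
highest equilibrium of `M`. -/
theorem payoff_le_removeGood {I J : Type} [Fintype I] [Fintype J] [DecidableEq J]
    (M : Market I J) (j0 : J)
    (p : J → ℝ) (w : I → ℝ) (μ : I → Option J) (hhigh : IsHighest M p w μ)
    (pg : {j : J // j ≠ j0} → ℝ) (wg : I → ℝ) (μg : I → Option {j : J // j ≠ j0})
    (hlow : IsLowest (M.removeGood j0) pg wg μg) (i : I) :
    w i ≤ wg i ∧ (μ i = some j0 → w i = wg i) := by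
  have h := (isReserveEquilib_zero_iff.mpr hhigh.1).raise_reserve j0
  have hg := hlow.1.extend (hhigh.utility_le_payoff_removeGood hlow)
  have hprice : p j0 = Function.extend Subtype.val pg (fun _ => p j0) j0 :=
    (Function.extend_apply' _ _ _ fun ⟨j, hj⟩ => j.2 hj).symm
  refine ⟨?_, fun hi => h.payoff_eq_of_price_eq hg le_rfl hi hprice⟩
  have hunmatched : ∀ i, (if wg i < w i then μ i else (μg i).map Subtype.val) ≠ some j0 := by
    intro i hi
    rcases h.inf_match_cases hg hi with ⟨-, hlt, -⟩ | ⟨-, -, hi⟩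
    · exact hlt.ne hprice
    · obtain ⟨j, -, hj⟩ := Option.map_eq_some_iff.mp hi
      exact j.2 hj
  exact le_sup_left.trans (hlow.payoff_le_of_removeGood (h.inf hg) hunmatched i)
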